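/- Let n, t be natural numbers with n > 2·t, indexing a check committee, and let M ⊆ Fin n be the set of malicious committee members. Let g : Fin n → ℝ be arbitrary per-validator scores. Define the extreme scores f by f j = −1 for j ∈ M and f j = g j for j ∉ M, and let h : Fin n → ℝ be any other manipulated scores with h j ≥ −1 for j ∈ M and h j = g j for j ∉ M. Then the t-trimmed mean of f is less than or equal to the t-trimmed mean of h. In particular, for a benign client, the extreme check-score manipulation yields an aggregated check score no larger than under any other manipulation. -/

import Mathlib

/-- The `k`-th order statistic (0-indexed) of `x : Fin n → ℝ`: the `k`-th entry of
the list obtained by sorting the `n` values of `x` in ascending order. -/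
noncomputable def orderStat {n : ℕ} (x : Fin n → ℝ) (k : Fin n) : ℝ :=
  x (Tuple.sort x k)

/-- The `t`-trimmed mean of `x : Fin n → ℝ` (for `n > 2·t`): the average of the
entries that remain after sorting `x` in ascending order and discarding the
smallest `t` and the largest `t` entries. -/
noncomputable def trimmedMean {n : ℕ} (t : ℕ) (x : Fin n → ℝ) : ℝ :=
  (∑ k ∈ Finset.univ.filter (fun k : Fin n => t ≤ (k : ℕ) ∧ (k : ℕ) < n - t),
      orderStat x k) / ((n - 2 * t : ℕ) : ℝ)

/-- Order statistics are monotone in the vector. -/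
theorem orderStat_mono_aux {n : ℕ} {x y : Fin n → ℝ} (hxy : ∀ j, x j ≤ y j) (k : Fin n) :
    orderStat x k ≤ orderStat y k := by
  unfold orderStat
  by_contra hlt
  have hlt := not_le.mp hlt
  have hx := Tuple.monotone_sort x
  have hy := Tuple.monotone_sort y
  have hdis : Disjoint ((Finset.Iic k).map (Tuple.sort y).toEmbedding)
      ((Finset.Ici k).map (Tuple.sort x).toEmbedding) := by
    rw [Finset.disjoint_left]
    intro j h1 h2
    obtain ⟨a, ha, rfl⟩ := Finset.mem_map.mp h1
    obtain ⟨b, hb, hab⟩ := Finset.mem_map.mp h2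
    have e1 := hy (Finset.mem_Iic.mp ha)
    have e2 := hx (Finset.mem_Ici.mp hb)
    simp only [Function.comp, Equiv.coe_toEmbedding] at e1 e2 hab
    rw [hab] at e2
    linarith [hxy (Tuple.sort y a)]
  have hc := Finset.card_le_univ (((Finset.Iic k).map (Tuple.sort y).toEmbedding).disjUnion
      ((Finset.Ici k).map (Tuple.sort x).toEmbedding) hdis)
  rw [Finset.card_disjUnion, Finset.card_map, Finset.card_map, Fin.card_Iic, Fin.card_Ici,
    Fintype.card_fin] at hc
  have := k.isLt
  omega

/-- **Optimality of the extreme manipulation for a benign client.**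
Let `n > 2·t` index a check committee with malicious members `M ⊆ Fin n`, and let
`g` be arbitrary per-validator scores. The extreme scores `f` set `f j = -1` for
`j ∈ M` and `f j = g j` otherwise. For any other manipulated scores `h` with
`h j ≥ -1` for `j ∈ M` and `h j = g j` for `j ∉ M`, the `t`-trimmed mean of `f` is
at most the `t`-trimmed mean of `h`. -/
theorem extreme_manipulation_le_trimmedMean {n t : ℕ} (hn : 2 * t < n)
    (M : Finset (Fin n)) (g h : Fin n → ℝ)
    (hM : ∀ j ∈ M, -1 ≤ h j) (hMc : ∀ j ∉ M, h j = g j) :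
    trimmedMean t (fun j => if j ∈ M then (-1 : ℝ) else g j) ≤ trimmedMean t h := by
  unfold trimmedMean
  refine div_le_div_of_nonneg_right (Finset.sum_le_sum fun k _ => ?_) (Nat.cast_nonneg _)
  refine orderStat_mono_aux (fun j => ?_) k
  by_cases hj : j ∈ M
  · simpa [hj] using hM j hj
  · simp [hj, hMc j hj]
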